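/- arXiv:1605.07913 — 3 statements merged into one kernel-verified Lean document; each statement's English description precedes it below -/
import Mathlib

section
/- Let Φ ∈ ℝ^{n×p}, f, z ∈ ℝⁿ, σ > 0, ζ ∈ ℝᵖ with Φᵀ(z − f) = σζ, let α > 0 and ν₁,…,ν_p ≥ 0, and let θ̂ minimize L(t) = ‖Φt − z‖₂² + 2α Σ_{j=1}^p ν_j|t_j| over t ∈ ℝᵖ. Then for every t ∈ ℝᵖ, writing f_t = Φt and f_θ̂ = Φθ̂: ‖f_θ̂ − f‖₂² + ‖Φ(θ̂ − t)‖₂² ≤ ‖f_t − f‖₂² + 2σ(θ̂ − t)ᵀζ + 2α Σ_{j=1}^p ν_j(|t_j| − |θ̂_j|). -/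
open MeasureTheory ProbabilityTheory Matrix Finset

noncomputable section

/-- Squared Euclidean norm of a vector. -/
def sqNorm {n : ℕ} (v : Fin n → ℝ) : ℝ := ∑ i, (v i)^2

/-!
On a segment, a convex penalty lies below its chord, while the least-squares loss lies below its
chord by an explicit multiple of `‖A (θ - t)‖ ^ 2`. Comparing the minimizer `θ` of the penalized
loss with the points of the segment from `θ` to `t`, and letting the point tend to `θ`, therefore
shows that the penalized loss at `t` exceeds its minimum by at least `‖A (θ - t)‖ ^ 2`. Replacing
the observation `z` by the target `f` changes the difference of the two losses only by a term linear
in `θ - t`, which is the noise term.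
-/

theorem add_le_of_isMinOn_of_combo_le {E : Type*} [AddCommMonoid E] [SMul ℝ E] {s : Set E}
    {F : E → ℝ} {θ t : E} {d : ℝ} (hs : Convex ℝ s) (hθ : θ ∈ s) (ht : t ∈ s)
    (hmin : IsMinOn F s θ)
    (hcombo : ∀ a b : ℝ, 0 < a → 0 < b → a + b = 1 →
      F (a • θ + b • t) ≤ a * F θ + b * F t - a * b * d) :
    F θ + d ≤ F t := by
  have hgain : ∀ b ∈ Set.Ioo (0 : ℝ) 1, F θ + (1 - b) * d ≤ F t := by
    rintro b ⟨hb₀, hb₁⟩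
    have ha : 0 < 1 - b := sub_pos.2 hb₁
    have hle : F θ ≤ (1 - b) * F θ + b * F t - (1 - b) * b * d :=
      (hmin (hs hθ ht ha.le hb₀.le (sub_add_cancel 1 b))).trans
        (hcombo _ _ ha hb₀ (sub_add_cancel 1 b))
    refine le_of_mul_le_mul_left ?_ hb₀
    linear_combination hle
  have hlim : Filter.Tendsto (fun b : ℝ ↦ F θ + (1 - b) * d) (nhdsWithin 0 (Set.Ioi 0))
      (nhds (F θ + d)) := by
    have hcont : Continuous fun b : ℝ ↦ F θ + (1 - b) * d := by fun_prop
    simpa using (hcont.tendsto 0).mono_left nhdsWithin_le_nhds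
  exact le_of_tendsto hlim (Filter.eventually_of_mem (Ioo_mem_nhdsGT one_pos) hgain)

theorem convexOn_finset_sum {𝕜 E β ι : Type*} [Semiring 𝕜] [PartialOrder 𝕜] [AddCommMonoid E]
    [AddCommMonoid β] [PartialOrder β] [IsOrderedAddMonoid β] [Module 𝕜 E] [Module 𝕜 β]
    {s : Set E} {g : ι → E → β} (S : Finset ι) (hs : Convex 𝕜 s)
    (hg : ∀ i ∈ S, ConvexOn 𝕜 s (g i)) : ConvexOn 𝕜 s fun x ↦ ∑ i ∈ S, g i x := by
  classical
  induction S using Finset.induction_on with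
  | empty => simpa using convexOn_const (0 : β) hs
  | insert i S hi ih =>
    simp only [Finset.sum_insert hi]
    rw [Finset.forall_mem_insert] at hg
    exact hg.1.add (ih hg.2)

theorem convexOn_sum_mul_abs {ι : Type*} [Fintype ι] {ν : ι → ℝ} (hν : ∀ j, 0 ≤ ν j) :
    ConvexOn ℝ Set.univ fun t : ι → ℝ ↦ ∑ j, ν j * |t j| :=
  convexOn_finset_sum _ convex_univ fun j _ ↦
    (convexOn_univ_norm.comp_linearMap (LinearMap.proj (R := ℝ) (φ := fun _ ↦ ℝ) j)).smul (hν j)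

section PenalizedLeastSquares

variable {H : Type*} [SeminormedAddCommGroup H] [InnerProductSpace ℝ H]

theorem norm_combo_sq {a b : ℝ} (hab : a + b = 1) (x y : H) :
    ‖a • x + b • y‖ ^ 2 = a * ‖x‖ ^ 2 + b * ‖y‖ ^ 2 - a * b * ‖x - y‖ ^ 2 := by
  simp only [norm_add_sq_real, norm_sub_sq_real, norm_smul, real_inner_smul_left,
    real_inner_smul_right, mul_pow, Real.norm_eq_abs, sq_abs]
  obtain rfl := eq_sub_of_add_eq hab
  ring

theorem norm_sub_sq_sub_norm_sub_sq (x y f z : H) :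
    ‖x - f‖ ^ 2 - ‖y - f‖ ^ 2 =
      ‖x - z‖ ^ 2 - ‖y - z‖ ^ 2 + 2 * inner ℝ (x - y) (z - f) := by
  simp only [norm_sub_sq_real, inner_sub_left, inner_sub_right]
  ring

variable {E : Type*} [AddCommGroup E] [Module ℝ E] {s : Set E} {g : E → ℝ} {θ t : E}

theorem norm_map_sub_sq_combo_add_le (A : E →ₗ[ℝ] H) (z : H) (hg : ConvexOn ℝ s g) (hθ : θ ∈ s)
    (ht : t ∈ s) {a b : ℝ} (ha : 0 ≤ a) (hb : 0 ≤ b) (hab : a + b = 1) :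
    ‖A (a • θ + b • t) - z‖ ^ 2 + g (a • θ + b • t) ≤
      a * (‖A θ - z‖ ^ 2 + g θ) + b * (‖A t - z‖ ^ 2 + g t) - a * b * ‖A (θ - t)‖ ^ 2 := by
  have hresidual : A (a • θ + b • t) - z = a • (A θ - z) + b • (A t - z) := by
    obtain rfl := eq_sub_of_add_eq hab
    rw [map_add, map_smul, map_smul]
    module
  have hpenalty : g (a • θ + b • t) ≤ a * g θ + b * g t := hg.2 hθ ht ha hb hab
  rw [hresidual, norm_combo_sq hab, sub_sub_sub_cancel_right, ← map_sub]
  linear_combination hpenalty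

theorem norm_map_sub_sq_add_le_of_isMinOn (A : E →ₗ[ℝ] H) (z : H) (hg : ConvexOn ℝ s g)
    (hθ : θ ∈ s) (ht : t ∈ s) (hmin : IsMinOn (fun u ↦ ‖A u - z‖ ^ 2 + g u) s θ) :
    ‖A θ - z‖ ^ 2 + g θ + ‖A (θ - t)‖ ^ 2 ≤ ‖A t - z‖ ^ 2 + g t :=
  add_le_of_isMinOn_of_combo_le hg.1 hθ ht hmin fun _ _ ha hb hab ↦
    norm_map_sub_sq_combo_add_le A z hg hθ ht ha.le hb.le hab

theorem norm_map_sub_sq_add_le_inner_of_isMinOn (A : E →ₗ[ℝ] H) (f z : H)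
    (hg : ConvexOn ℝ s g) (hθ : θ ∈ s) (ht : t ∈ s)
    (hmin : IsMinOn (fun u ↦ ‖A u - z‖ ^ 2 + g u) s θ) :
    ‖A θ - f‖ ^ 2 + ‖A (θ - t)‖ ^ 2 ≤
      ‖A t - f‖ ^ 2 + 2 * inner ℝ (A (θ - t)) (z - f) + (g t - g θ) := by
  have hz := norm_map_sub_sq_add_le_of_isMinOn A z hg hθ ht hmin
  have hchange := norm_sub_sq_sub_norm_sub_sq (A θ) (A t) f z
  rw [← map_sub] at hchange
  linear_combination hz + hchange

end PenalizedLeastSquares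

theorem sqNorm_eq_norm_toLp_sq {n : ℕ} (v : Fin n → ℝ) : sqNorm v = ‖WithLp.toLp 2 v‖ ^ 2 :=
  (EuclideanSpace.real_norm_sq_eq (WithLp.toLp 2 v)).symm

theorem mulVec_dotProduct_of_transpose_mulVec_eq_smul {m ι R : Type*} [Fintype m] [Fintype ι]
    [CommSemiring R] {Φ : Matrix m ι R} {w : m → R} {σ : R} {ζ : ι → R} (hζ : Φᵀ *ᵥ w = σ • ζ)
    (u : ι → R) :
    (Φ *ᵥ u) ⬝ᵥ w = σ * (u ⬝ᵥ ζ) := by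
  rw [← vecMul_transpose, ← dotProduct_mulVec, hζ, dotProduct_smul, smul_eq_mul]

theorem stmt_4_general {n : ℕ} {ι : Type*} [Fintype ι] (Φ : Matrix (Fin n) ι ℝ)
    (f z : Fin n → ℝ) {σ : ℝ} {ζ : ι → ℝ} (hζ : Φᵀ *ᵥ (z - f) = σ • ζ)
    {s : Set (ι → ℝ)} {g : (ι → ℝ) → ℝ} (hg : ConvexOn ℝ s g) {θ t : ι → ℝ} (hθ : θ ∈ s)
    (ht : t ∈ s) (hmin : IsMinOn (fun u ↦ sqNorm (Φ *ᵥ u - z) + g u) s θ) :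
    sqNorm (Φ *ᵥ θ - f) + sqNorm (Φ *ᵥ (θ - t)) ≤
      sqNorm (Φ *ᵥ t - f) + 2 * σ * ((θ - t) ⬝ᵥ ζ) + (g t - g θ) := by
  let A : (ι → ℝ) →ₗ[ℝ] EuclideanSpace ℝ (Fin n) :=
    (WithLp.linearEquiv 2 ℝ (Fin n → ℝ)).symm.toLinearMap ∘ₗ Φ.mulVecLin
  have hnoise : inner ℝ (A (θ - t)) (WithLp.toLp 2 (z - f)) = σ * ((θ - t) ⬝ᵥ ζ) := by
    rw [← mulVec_dotProduct_of_transpose_mulVec_eq_smul hζ, dotProduct_comm]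
    exact EuclideanSpace.inner_eq_star_dotProduct _ _
  simp only [sqNorm_eq_norm_toLp_sq] at hmin ⊢
  rw [mul_assoc, ← hnoise]
  exact norm_map_sub_sq_add_le_inner_of_isMinOn A (.toLp 2 f) (.toLp 2 z) hg hθ ht hmin

/-- basic inequality for the weighted Lasso with noise vector ζ satisfying
Φᵀ(z − f) = σζ. -/
theorem stmt_4 {n p : ℕ} (Φ : Matrix (Fin n) (Fin p) ℝ) (f z : Fin n → ℝ)
    (σ : ℝ) (hσ : 0 < σ) (ζ : Fin p → ℝ) (hζ : Φᵀ.mulVec (z - f) = σ • ζ)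
    (α : ℝ) (hα : 0 < α) (ν : Fin p → ℝ) (hν : ∀ j, 0 ≤ ν j)
    (θ : Fin p → ℝ)
    (hmin : ∀ t : Fin p → ℝ,
      sqNorm (Φ.mulVec θ - z) + 2 * α * ∑ j, ν j * |θ j| ≤
        sqNorm (Φ.mulVec t - z) + 2 * α * ∑ j, ν j * |t j|) :
    ∀ t : Fin p → ℝ,
      sqNorm (Φ.mulVec θ - f) + sqNorm (Φ.mulVec (θ - t)) ≤
        sqNorm (Φ.mulVec t - f) + 2 * σ * ((θ - t) ⬝ᵥ ζ) +
          2 * α * ∑ j, ν j * (|t j| - |θ j|) := by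
  have hg := (convexOn_sum_mul_abs hν).smul (c := 2 * α) (by positivity)
  intro t
  simpa only [smul_eq_mul, mul_sub, sum_sub_distrib] using!
    stmt_4_general Φ f z hζ hg (Set.mem_univ θ) (Set.mem_univ t) (isMinOn_univ_iff.2 hmin)
end
end

section
/- Let Φ ∈ ℝ^{n×p}, let δ ∈ (0,1) and s ≥ 1 be such that λ_min(2s;Φ) ≥ 1 − δ, let ν₁,…,ν_p ≥ 0, α > 0, J ⊆ {1,…,p}, and let d ∈ ℝᵖ with ‖d‖₀ ≤ 2s. Then 4α Σ_{j∈J} ν_j|d_j| ≤ ‖Φd‖₂² + (4α²/(1−δ)²) Σ_{j∈J} ν_j². -/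
open MeasureTheory ProbabilityTheory Matrix Finset

noncomputable section

/-- ℓ₀ "norm": the number of nonzero entries of a vector. -/
def l0 {p : ℕ} (t : Fin p → ℝ) : ℕ := (Function.support t).ncard

/-!
By Young's inequality with parameter `c = 1 - δ`, each summand satisfies
`4 α νⱼ |dⱼ| ≤ c dⱼ² + (2 α νⱼ)² / c`. The terms `c dⱼ²` sum to at most `c ‖d‖² ≤ ‖Φ d‖²`, by the
restricted eigenvalue bound at `d` itself. This gives the constant `4 α² / c`, which is at most
`4 α² / c²` because `c ≤ 1`.
-/

section

variable {ι κ 𝕜 : Type*} [Field 𝕜] [LinearOrder 𝕜] [IsStrictOrderedRing 𝕜]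

theorem two_mul_sum_mul_le_add_mul_sum_sq (J : Finset ι) (f g : ι → 𝕜) {ε : 𝕜} (hε : 0 < ε) :
    2 * ∑ j ∈ J, f j * g j ≤ ε * ∑ j ∈ J, f j ^ 2 + ε⁻¹ * ∑ j ∈ J, g j ^ 2 := by
  simp only [Finset.mul_sum, ← sum_add_distrib, ← mul_assoc]
  exact sum_le_sum fun j _ ↦ two_mul_le_add_mul_sq hε

theorem stmt_8_general [Fintype ι] [Fintype κ] (Φ : Matrix κ ι 𝕜) {c : 𝕜} (hc : 0 < c)
    (ν : ι → 𝕜) (α : 𝕜) (J : Finset ι) (d : ι → 𝕜)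
    (hd : c * ∑ j, d j ^ 2 ≤ ∑ i, Φ.mulVec d i ^ 2) :
    4 * α * ∑ j ∈ J, ν j * |d j| ≤
      ∑ i, Φ.mulVec d i ^ 2 + 4 * α ^ 2 / c * ∑ j ∈ J, ν j ^ 2 := by
  have sum_sq_le : ∑ j ∈ J, |d j| ^ 2 ≤ ∑ j, d j ^ 2 := by
    simp only [sq_abs]
    exact sum_le_univ_sum_of_nonneg fun j ↦ sq_nonneg (d j)
  calc 4 * α * ∑ j ∈ J, ν j * |d j|
      = 2 * ∑ j ∈ J, |d j| * (2 * α * ν j) := by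
        simp only [Finset.mul_sum]
        exact sum_congr rfl fun j _ ↦ by ring
    _ ≤ c * ∑ j ∈ J, |d j| ^ 2 + c⁻¹ * ∑ j ∈ J, (2 * α * ν j) ^ 2 :=
        two_mul_sum_mul_le_add_mul_sum_sq J _ _ hc
    _ = c * ∑ j ∈ J, |d j| ^ 2 + 4 * α ^ 2 / c * ∑ j ∈ J, ν j ^ 2 := by
        simp only [mul_pow, ← Finset.mul_sum]
        ring
    _ ≤ c * ∑ j, d j ^ 2 + 4 * α ^ 2 / c * ∑ j ∈ J, ν j ^ 2 := by gcongr
    _ ≤ ∑ i, Φ.mulVec d i ^ 2 + 4 * α ^ 2 / c * ∑ j ∈ J, ν j ^ 2 := by gcongr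

end

/-- bound on the weighted ℓ₁ term under the restricted eigenvalue condition
λ_min(2s;Φ) ≥ 1 − δ. -/
theorem stmt_8 {n p : ℕ} (Φ : Matrix (Fin n) (Fin p) ℝ) (δ : ℝ) (hδ : δ ∈ Set.Ioo (0:ℝ) 1)
    (s : ℕ) (hs : 1 ≤ s)
    (hRIP : ∀ t : Fin p → ℝ, l0 t ≤ 2 * s → (1 - δ) * sqNorm t ≤ sqNorm (Φ.mulVec t))
    (ν : Fin p → ℝ) (hν : ∀ j, 0 ≤ ν j) (α : ℝ) (hα : 0 < α)
    (J : Finset (Fin p)) (d : Fin p → ℝ) (hd : l0 d ≤ 2 * s) :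
    4 * α * ∑ j ∈ J, ν j * |d j| ≤
      sqNorm (Φ.mulVec d) + (4 * α^2 / (1 - δ)^2) * ∑ j ∈ J, (ν j)^2 := by
  have one_sub_pos : 0 < 1 - δ := sub_pos.2 hδ.2
  have sq_le : (1 - δ) ^ 2 ≤ 1 - δ :=
    pow_le_of_le_one one_sub_pos.le (sub_le_self 1 hδ.1.le) two_ne_zero
  calc 4 * α * ∑ j ∈ J, ν j * |d j|
      ≤ sqNorm (Φ.mulVec d) + 4 * α ^ 2 / (1 - δ) * ∑ j ∈ J, ν j ^ 2 :=
        stmt_8_general Φ one_sub_pos ν α J d (hRIP d hd)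
    _ ≤ sqNorm (Φ.mulVec d) + 4 * α ^ 2 / (1 - δ) ^ 2 * ∑ j ∈ J, ν j ^ 2 := by gcongr
end
end

section
/- (Slow Lasso rate.) Consider y = Qf + ση ∈ ℝⁿ with Q invertible, Φ ∈ ℝ^{n×p} with ΦΦᵀ invertible, Ψ = Q(QᵀQ)⁻¹Φ with ν_j = ‖ψ_j‖₂, z = (ΦΦᵀ)⁻¹ΦΨᵀy, and θ̂ a minimizer of ‖Φt − z‖₂² + 2α Σ_j ν_j|t_j| with α ≥ ᾱ₀ = σ√(2(τ+1) log p). If the noise event {for all j: |ψ_jᵀη| ≤ ν_j √(2(τ+1) log p)} holds, then n⁻¹‖f_θ̂ − f‖₂² ≤ inf over t ∈ ℝᵖ of [ n⁻¹‖f_t − f‖₂² + 4(α/n) Σ_{j=1}^p ν_j|t_j| ]. -/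
open MeasureTheory ProbabilityTheory Matrix Finset

noncomputable section

/-!
Because `Φ Φᵀ` is invertible, the pseudo-observation is `z = f + e`, where `e` is the least-squares
inverse of `Q` applied to the noise, and `Φᵀ e = Ψᵀ (σ η)`. Comparing the Lasso objective at `θ`
and at `t`, the quadratic terms in `e` cancel and only the linear term `2 ⟨e, Φ θ - Φ t⟩` remains.
On the noise event this is at most `2 α ∑ ν_j (|θ_j| + |t_j|)`: its `θ` part is absorbed by the
penalty at `θ`, and its `t` part doubles the penalty at `t`, which is where the `4` comes from.
-/

section LeastSquares

variable {R m n ι : Type*} [CommRing R] [Fintype m] [Fintype n] [DecidableEq n]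

/-- The least-squares inverse `(QᵀQ)⁻¹Qᵀ`, which is the Moore–Penrose inverse of a real matrix `Q`
of full column rank. It turns an observation `Q f + ξ` back into a perturbation of `f`. When `QᵀQ`
is not invertible, the inverse in the formula is zero. -/
def leastSquaresInv (Q : Matrix m n R) : Matrix n m R :=
  (Qᵀ * Q)⁻¹ * Qᵀ

theorem leastSquaresInv_mul_self {Q : Matrix m n R} (hQ : IsUnit (Qᵀ * Q).det) :
    leastSquaresInv Q * Q = 1 := by
  rw [leastSquaresInv, Matrix.mul_assoc, nonsing_inv_mul _ hQ]

theorem transpose_mul_gram_inv_mul (Q : Matrix m n R) (Φ : Matrix n ι R) :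
    (Q * (Qᵀ * Q)⁻¹ * Φ)ᵀ = Φᵀ * leastSquaresInv Q := by
  simp only [leastSquaresInv, transpose_mul, transpose_nonsing_inv, transpose_transpose]

theorem gram_inv_mul_mul_transpose_mulVec [Fintype ι] {Q : Matrix m n R}
    (hQ : IsUnit (Qᵀ * Q).det) {Φ : Matrix n ι R} (hΦ : IsUnit (Φ * Φᵀ).det)
    (f : n → R) (ξ : m → R) :
    ((Φ * Φᵀ)⁻¹ * Φ * (Q * (Qᵀ * Q)⁻¹ * Φ)ᵀ) *ᵥ (Q *ᵥ f + ξ) =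
      f + leastSquaresInv Q *ᵥ ξ := by
  have cancel_dictionary :
      (Φ * Φᵀ)⁻¹ * Φ * (Q * (Qᵀ * Q)⁻¹ * Φ)ᵀ = leastSquaresInv Q := by
    rw [transpose_mul_gram_inv_mul, Matrix.mul_assoc, ← Matrix.mul_assoc Φ,
      nonsing_inv_mul_cancel_left _ _ hΦ]
  rw [cancel_dictionary, mulVec_add, mulVec_mulVec, leastSquaresInv_mul_self hQ, one_mulVec]

end LeastSquares

section OrderedRing

variable {R ι : Type*} [CommRing R] [LinearOrder R] [IsStrictOrderedRing R]

theorem abs_mul_le_mul_of_abs_le_mul {σ c ν r α : R} (hσ : 0 ≤ σ) (hν : 0 ≤ ν)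
    (hα : σ * r ≤ α) (hc : |c| ≤ ν * r) : |σ * c| ≤ α * ν :=
  calc |σ * c| = σ * |c| := by rw [abs_mul, abs_of_nonneg hσ]
    _ ≤ σ * (ν * r) := mul_le_mul_of_nonneg_left hc hσ
    _ = σ * r * ν := by ring
    _ ≤ α * ν := mul_le_mul_of_nonneg_right hα hν

theorem dotProduct_le_sum_mul_abs [Fintype ι] {c w : ι → R} (hc : ∀ j, |c j| ≤ w j)
    (x : ι → R) : c ⬝ᵥ x ≤ ∑ j, w j * |x j| :=
  sum_le_sum fun j _ =>
    calc c j * x j ≤ |c j| * |x j| := (le_abs_self _).trans_eq (abs_mul _ _)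
      _ ≤ w j * |x j| := mul_le_mul_of_nonneg_right (hc j) (abs_nonneg _)

end OrderedRing

section Lasso

variable {n : ℕ} {ι : Type*} [Fintype ι]

theorem sqNorm_sub (v e : Fin n → ℝ) :
    sqNorm (v - e) = sqNorm v - 2 * (e ⬝ᵥ v) + sqNorm e := by
  simp only [sqNorm, dotProduct, Pi.sub_apply, sub_sq, sum_add_distrib, sum_sub_distrib, mul_sum]
  simp only [mul_assoc, mul_comm (v _)]

theorem sqNorm_sub_add_le_iff (u v f e : Fin n → ℝ) (a b : ℝ) :
    sqNorm (u - (f + e)) + a ≤ sqNorm (v - (f + e)) + b ↔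
      sqNorm (u - f) + a ≤ sqNorm (v - f) + b + 2 * (e ⬝ᵥ (u - v)) := by
  simp only [← sub_sub, sqNorm_sub _ e, dotProduct_sub]
  constructor <;> intro h <;> linarith

theorem sqNorm_mulVec_sub_le_of_lasso_le {Φ : Matrix (Fin n) ι ℝ} {f e : Fin n → ℝ}
    {α : ℝ} {ν θ t : ι → ℝ} (hnoise : ∀ j, |(Φᵀ *ᵥ e) j| ≤ α * ν j)
    (hle : sqNorm (Φ *ᵥ θ - (f + e)) + 2 * α * ∑ j, ν j * |θ j| ≤
      sqNorm (Φ *ᵥ t - (f + e)) + 2 * α * ∑ j, ν j * |t j|) :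
    sqNorm (Φ *ᵥ θ - f) ≤ sqNorm (Φ *ᵥ t - f) + 4 * α * ∑ j, ν j * |t j| := by
  have noise_le (x : ι → ℝ) : (Φᵀ *ᵥ e) ⬝ᵥ x ≤ α * ∑ j, ν j * |x j| := by
    simpa only [mul_sum, mul_assoc] using dotProduct_le_sum_mul_abs hnoise x
  have noise_diff_le : e ⬝ᵥ (Φ *ᵥ θ - Φ *ᵥ t) ≤
      α * ∑ j, ν j * |θ j| + α * ∑ j, ν j * |t j| :=
    calc e ⬝ᵥ (Φ *ᵥ θ - Φ *ᵥ t) = (Φᵀ *ᵥ e) ⬝ᵥ θ + (Φᵀ *ᵥ e) ⬝ᵥ (-t) := by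
          rw [← mulVec_sub, dotProduct_mulVec, ← mulVec_transpose, sub_eq_add_neg, dotProduct_add]
      _ ≤ _ := by simpa only [Pi.neg_apply, abs_neg] using add_le_add (noise_le θ) (noise_le (-t))
  have basic_inequality := (sqNorm_sub_add_le_iff _ _ _ _ _ _).mp hle
  linarith

theorem stmt_10_general {m : Type*} [Fintype m]
    (Q : Matrix m (Fin n) ℝ) (hQ : IsUnit (Qᵀ * Q).det)
    (Φ : Matrix (Fin n) ι ℝ) (hΦ : IsUnit (Φ * Φᵀ).det)
    (Ψ : Matrix m ι ℝ) (hΨ : Ψ = Q * (Qᵀ * Q)⁻¹ * Φ)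
    (ν : ι → ℝ) (f : Fin n → ℝ) (η : m → ℝ) (σ : ℝ)
    (y : m → ℝ) (z : Fin n → ℝ) (hy : y = Q *ᵥ f + σ • η)
    (hz : z = ((Φ * Φᵀ)⁻¹ * Φ * Ψᵀ) *ᵥ y) (α : ℝ) (θ : ι → ℝ)
    (hmin : ∀ t : ι → ℝ,
      sqNorm (Φ *ᵥ θ - z) + 2 * α * ∑ j, ν j * |θ j| ≤
        sqNorm (Φ *ᵥ t - z) + 2 * α * ∑ j, ν j * |t j|)
    (hnoise : ∀ j, |σ * ((fun i => Ψ i j) ⬝ᵥ η)| ≤ α * ν j) (t : ι → ℝ) :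
    (n : ℝ)⁻¹ * sqNorm (Φ *ᵥ θ - f) ≤
      (n : ℝ)⁻¹ * sqNorm (Φ *ᵥ t - f) + 4 * (α / n) * ∑ j, ν j * |t j| := by
  subst hΨ hy
  rw [gram_inv_mul_mul_transpose_mulVec hQ hΦ] at hz
  subst hz
  have dictionary_noise_le (j : ι) : |(Φᵀ *ᵥ (leastSquaresInv Q *ᵥ (σ • η))) j| ≤ α * ν j := by
    rw [mulVec_mulVec, ← transpose_mul_gram_inv_mul, mulVec_smul]
    exact hnoise j
  calc (n : ℝ)⁻¹ * sqNorm (Φ *ᵥ θ - f)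
      ≤ (n : ℝ)⁻¹ * (sqNorm (Φ *ᵥ t - f) + 4 * α * ∑ j, ν j * |t j|) :=
        mul_le_mul_of_nonneg_left
          (sqNorm_mulVec_sub_le_of_lasso_le dictionary_noise_le (hmin t)) (by positivity)
    _ = _ := by ring

end Lasso

/-- slow Lasso rate on the noise event. -/
theorem stmt_10 {n p : ℕ} (Q : Matrix (Fin n) (Fin n) ℝ) (hQ : IsUnit Q.det)
    (Φ : Matrix (Fin n) (Fin p) ℝ) (hΦ : IsUnit (Φ * Φᵀ).det)
    (Ψ : Matrix (Fin n) (Fin p) ℝ) (hΨ : Ψ = Q * (Qᵀ * Q)⁻¹ * Φ)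
    (ν : Fin p → ℝ) (hν : ∀ j, ν j = Real.sqrt (sqNorm (fun i => Ψ i j)))
    (f η : Fin n → ℝ) (σ : ℝ) (hσ : 0 < σ) (τ : ℝ) (hτ : 0 < τ)
    (y z : Fin n → ℝ) (hy : y = Q.mulVec f + σ • η)
    (hz : z = ((Φ * Φᵀ)⁻¹ * Φ * Ψᵀ).mulVec y)
    (α : ℝ) (hα : α ≥ σ * Real.sqrt (2 * (τ + 1) * Real.log p))
    (θ : Fin p → ℝ)
    (hmin : ∀ t : Fin p → ℝ,
      sqNorm (Φ.mulVec θ - z) + 2 * α * ∑ j, ν j * |θ j| ≤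
        sqNorm (Φ.mulVec t - z) + 2 * α * ∑ j, ν j * |t j|)
    (hnoise : ∀ j : Fin p,
      |(fun i => Ψ i j) ⬝ᵥ η| ≤ ν j * Real.sqrt (2 * (τ + 1) * Real.log p)) :
    ∀ t : Fin p → ℝ,
      (n : ℝ)⁻¹ * sqNorm (Φ.mulVec θ - f) ≤
        (n : ℝ)⁻¹ * sqNorm (Φ.mulVec t - f) + 4 * (α / n) * ∑ j, ν j * |t j| := by
  have hQtQ : IsUnit (Qᵀ * Q).det := by simpa only [det_mul, det_transpose] using hQ.mul hQ
  exact stmt_10_general Q hQtQ Φ hΦ Ψ hΨ ν f η σ y z hy hz α θ hmin fun j =>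
    abs_mul_le_mul_of_abs_le_mul hσ.le (hν j ▸ Real.sqrt_nonneg _) hα (hnoise j)
end
end
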